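/- Let S = {p_1, …, p_k} be a set of k distinct primes and let (q_n)_{n≥1} be an increasing sequence of positive integers each of which lies in A_S (i.e. all prime factors of every q_n belong to S). Then for every α ∈ (0,1), the sequence (q_n) is α-separated: there exists m₀ ∈ ℕ such that for all integers m, n with m₀ ≤ m < n, whenever s, t ≥ 1 are positive integers with 1 ≤ |s q_m − t q_n| < q_m^α, then s > m^{12}. -/

import Mathlib

open Polynomial in
/-- The operator `N θ + l` on polynomials, where `θ = X d/dX`. -/
noncomputable def twistedEuler (N l : ℕ) (A : ℝ[X]) : ℝ[X] :=
  C (N : ℝ) * (X * derivative A) + C (l : ℝ) * A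

section ZeroEstimate

open Polynomial

theorem coeff_twistedEuler_iterate (N l j i : ℕ) (A : ℝ[X]) :
    ((twistedEuler N l)^[j] A).coeff i = ((N * i + l : ℕ) : ℝ) ^ j * A.coeff i := by
  induction j generalizing A with
  | zero => simp
  | succ j ih =>
    rw [Function.iterate_succ_apply, ih]
    have : (twistedEuler N l A).coeff i = ((N * i + l : ℕ) : ℝ) * A.coeff i := by
      unfold twistedEuler
      rw [coeff_add, coeff_C_mul, coeff_C_mul]
      cases i with
      | zero => simp
      | succ i => rw [coeff_X_mul, coeff_derivative]; push_cast; ring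
    rw [this]; ring

theorem natDegree_twistedEuler_iterate_le (N l j : ℕ) (A : ℝ[X]) :
    ((twistedEuler N l)^[j] A).natDegree ≤ A.natDegree := by
  rw [natDegree_le_iff_coeff_eq_zero]
  intro i hi
  rw [coeff_twistedEuler_iterate, coeff_eq_zero_of_natDegree_lt hi, mul_zero]

theorem coeff_prod_sum_of_natDegree_le {ι : Type*} (s : Finset ι) (f : ι → ℝ[X]) (d : ι → ℕ)
    (h : ∀ i ∈ s, (f i).natDegree ≤ d i) :
    (∏ i ∈ s, f i).coeff (∑ i ∈ s, d i) = ∏ i ∈ s, (f i).coeff (d i) := by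
  classical
  induction s using Finset.induction_on with
  | empty => simp
  | insert a s ha ih =>
    have hs : ∀ i ∈ s, (f i).natDegree ≤ d i := fun i hi => h i (Finset.mem_insert_of_mem hi)
    rw [Finset.prod_insert ha, Finset.sum_insert ha, Finset.prod_insert ha,
      coeff_mul_add_eq_of_natDegree_le (h a (Finset.mem_insert_self a s))
        ((natDegree_prod_le _ _).trans (Finset.sum_le_sum hs)), ih hs]

/-- The Wronskian-type matrix attached to `∑ l, A l * y ^ (e l)` and the
derivation `N x ∂x + y ∂y`. -/
noncomputable def wronskianMatrix {m : ℕ} (N : ℕ) (e : Fin m → ℕ) (A : Fin m → ℝ[X]) :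
    Matrix (Fin m) (Fin m) ℝ[X] :=
  Matrix.of fun j l => (twistedEuler N (e l))^[(j : ℕ)] (A l)

theorem natDegree_det_wronskianMatrix_le {m : ℕ} (N : ℕ) (e : Fin m → ℕ) (A : Fin m → ℝ[X]) :
    (wronskianMatrix N e A).det.natDegree ≤ ∑ l, (A l).natDegree := by
  rw [Matrix.det_apply]
  refine natDegree_sum_le_of_forall_le _ _ fun σ _ => ?_
  refine (natDegree_smul_le _ _).trans ((natDegree_prod_le _ _).trans ?_)
  exact Finset.sum_le_sum fun l _ => natDegree_twistedEuler_iterate_le _ _ _ _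

theorem det_wronskianMatrix_ne_zero {m N : ℕ} {e : Fin m → ℕ} (he : Function.Injective e)
    (heN : ∀ l, e l < N) {A : Fin m → ℝ[X]} (hA : ∀ l, A l ≠ 0) :
    (wronskianMatrix N e A).det ≠ 0 := by
  intro h0
  have hcoeff : (wronskianMatrix N e A).det.coeff (∑ l, (A l).natDegree) =
      (Matrix.of fun j l : Fin m => (A l).leadingCoeff *
        (Matrix.vandermonde fun l => ((N * (A l).natDegree + e l : ℕ) : ℝ)).transpose j l).det := by
    rw [Matrix.det_apply, Matrix.det_apply, finsetSum_coeff]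
    refine Finset.sum_congr rfl fun σ _ => ?_
    rw [Units.smul_def, coeff_smul, Units.smul_def]
    congr 1
    rw [coeff_prod_sum_of_natDegree_le Finset.univ (fun l => wronskianMatrix N e A (σ l) l) _
      fun l _ => natDegree_twistedEuler_iterate_le N (e l) (σ l) (A l)]
    refine Finset.prod_congr rfl fun l _ => ?_
    rw [wronskianMatrix, Matrix.of_apply, coeff_twistedEuler_iterate]
    simp [Matrix.vandermonde_apply, mul_comm]
  rw [h0, coeff_zero, Matrix.det_mul_row, Matrix.det_transpose] at hcoeff
  refine mul_ne_zero (Finset.prod_ne_zero_iff.2 fun l _ => leadingCoeff_ne_zero.2 (hA l)) ?_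
    hcoeff.symm
  rw [Matrix.det_vandermonde_ne_zero_iff]
  intro a b hab
  have hab' : N * (A a).natDegree + e a = N * (A b).natDegree + e b := by
    dsimp only at hab
    exact_mod_cast hab
  apply he
  have := congrArg (· % N) hab'
  simpa [Nat.mul_add_mod, Nat.mod_eq_of_lt (heN a), Nat.mod_eq_of_lt (heN b)] using this

/-- Restriction of `A(x) y ^ l` to the curve `(x₀ u ^ N, w₀ u)` turns `twistedEuler`
into `u d/du`. -/
theorem euler_iterate_comp (N l j : ℕ) (x₀ w₀ : ℝ) (A : ℝ[X]) :
    (fun P : ℝ[X] => X * derivative P)^[j] (A.comp (C x₀ * X ^ N) * (C w₀ * X) ^ l) =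
      ((twistedEuler N l)^[j] A).comp (C x₀ * X ^ N) * (C w₀ * X) ^ l := by
  induction j generalizing A with
  | zero => rfl
  | succ j ih =>
    rw [Function.iterate_succ_apply, Function.iterate_succ_apply, ← ih]
    congr 1
    unfold twistedEuler
    simp only [derivative_mul, derivative_comp, derivative_pow, derivative_C, derivative_X,
      add_comp, mul_comp, C_comp, X_comp, mul_pow]
    cases N <;> cases l <;> simp <;> ring

theorem pow_dvd_euler_iterate {P : ℝ[X]} {M : ℕ} (h : (X - C 1) ^ M ∣ P) (j : ℕ) :
    (X - C 1) ^ (M - j) ∣ (fun P : ℝ[X] => X * derivative P)^[j] P := by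
  induction j with
  | zero => simpa
  | succ j ih =>
    rw [Nat.sub_succ, Function.iterate_succ_apply']
    exact (pow_sub_one_dvd_derivative_of_pow_dvd ih).mul_left _

theorem pow_dvd_of_pow_dvd_comp {N K : ℕ} (hN : N ≠ 0) {x₀ : ℝ} (hx₀ : x₀ ≠ 0) {D : ℝ[X]}
    (h : (X - C 1) ^ K ∣ D.comp (C x₀ * X ^ N)) : (X - C x₀) ^ K ∣ D := by
  rcases eq_or_ne D 0 with rfl | hD
  · simp
  obtain ⟨g, hg, hgx⟩ := exists_eq_pow_rootMultiplicity_mul_and_not_dvd D hD x₀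
  set a := rootMultiplicity x₀ D
  suffices hKa : K ≤ a from (pow_dvd_pow _ hKa).trans ⟨g, hg⟩
  by_contra! hlt
  have hcomp : D.comp (C x₀ * X ^ N) = (X - C 1) ^ a *
      (C x₀ ^ a * (∑ i ∈ Finset.range N, X ^ i) ^ a * g.comp (C x₀ * X ^ N)) := by
    have hgeom : (C x₀ * X ^ N - C x₀ : ℝ[X]) =
        (X - C 1) * (C x₀ * ∑ i ∈ Finset.range N, X ^ i) := by
      have := geom_sum_mul (X : ℝ[X]) N
      rw [C_1]; linear_combination -C x₀ * this
    conv_lhs => rw [hg]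
    simp only [mul_comp, pow_comp, sub_comp, X_comp, C_comp]
    rw [hgeom, mul_pow, mul_pow]; ring
  have hdvd : (X - C 1 : ℝ[X]) ∣
      C x₀ ^ a * (∑ i ∈ Finset.range N, X ^ i) ^ a * g.comp (C x₀ * X ^ N) := by
    have h' := (pow_dvd_pow (X - C 1 : ℝ[X]) (Nat.succ_le_of_lt hlt)).trans h
    rw [hcomp, pow_succ] at h'
    exact (mul_dvd_mul_iff_left (pow_ne_zero _ (X_sub_C_ne_zero 1))).1 h'
  rw [dvd_iff_isRoot, IsRoot.def] at hdvd
  rw [dvd_iff_isRoot, IsRoot.def] at hgx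
  simp [eval_mul, eval_finsetSum, hx₀, hN, hgx] at hdvd

theorem pow_dvd_det_wronskianMatrix {m N M : ℕ} (hm : 0 < m) (hN : N ≠ 0) {e : Fin m → ℕ}
    {A : Fin m → ℝ[X]} {x₀ w₀ : ℝ} (hx₀ : x₀ ≠ 0) (hw₀ : w₀ ≠ 0)
    (h : (X - C 1) ^ M ∣ ∑ l, (A l).comp (C x₀ * X ^ N) * (C w₀ * X) ^ e l) :
    (X - C x₀) ^ (M - (m - 1)) ∣ (wronskianMatrix N e A).det := by
  apply pow_dvd_of_pow_dvd_comp hN hx₀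
  set φ : ℝ[X] →+* ℝ[X] := compRingHom (C x₀ * X ^ N) with hφ
  set F : Matrix (Fin m) (Fin m) ℝ[X] := φ.mapMatrix (wronskianMatrix N e A) with hF
  set v : Fin m → ℝ[X] := fun l => (C w₀ * X) ^ e l with hv
  have hdet : (wronskianMatrix N e A).det.comp (C x₀ * X ^ N) = F.det := by
    rw [hF, ← RingHom.map_det]; rfl
  have hFv : ∀ j, (F.mulVec v) j = (fun P : ℝ[X] => X * derivative P)^[(j : ℕ)]
      (∑ l, (A l).comp (C x₀ * X ^ N) * (C w₀ * X) ^ e l) := by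
    intro j
    have hsum : ∀ (k : ℕ) (f : Fin m → ℝ[X]), (fun P : ℝ[X] => X * derivative P)^[k] (∑ l, f l) =
        ∑ l, (fun P : ℝ[X] => X * derivative P)^[k] (f l) := by
      intro k f
      induction k with
      | zero => rfl
      | succ k ih =>
        simp only [Function.iterate_succ_apply', ih, derivative_sum, Finset.mul_sum]
    rw [hsum]
    simp only [euler_iterate_comp]
    rfl
  have hcramer : F.adjugate.mulVec (F.mulVec v) = F.det • v := by
    rw [Matrix.mulVec_mulVec, Matrix.adjugate_mul, Matrix.smul_mulVec, Matrix.one_mulVec]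
  have hdvd : (X - C 1) ^ (M - (m - 1)) ∣ F.det * v ⟨0, hm⟩ := by
    have := congrFun hcramer ⟨0, hm⟩
    rw [Pi.smul_apply, smul_eq_mul] at this
    rw [← this]
    rw [Matrix.mulVec, dotProduct]
    refine Finset.dvd_sum fun j _ => Dvd.dvd.mul_left ?_ _
    rw [hFv]
    exact (pow_dvd_pow _ (by have := j.2; omega)).trans (pow_dvd_euler_iterate h j)
  rw [hdet]
  refine IsCoprime.dvd_of_dvd_mul_right (IsCoprime.pow ?_) hdvd
  refine ((irreducible_X_sub_C (1 : ℝ)).coprime_iff_not_dvd).2 ?_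
  rw [dvd_iff_isRoot]
  simpa using hw₀

theorem X_sub_one_pow_dvd_of_sum_choose_eq_zero {ι : Type*} (s : Finset ι) (p : ι → ℝ) (e : ι → ℕ)
    (M : ℕ) (h : ∀ j < M, ∑ i ∈ s, p i * ((e i).choose j : ℝ) = 0) :
    (X - C 1) ^ M ∣ ∑ i ∈ s, C (p i) * X ^ e i := by
  rw [X_sub_C_pow_dvd_iff, X_pow_dvd_iff]
  intro j hj
  rw [← taylor_apply, taylor_coeff, map_sum, eval_finsetSum, ← h j hj]
  refine Finset.sum_congr rfl fun i _ => ?_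
  rw [C_mul_X_pow_eq_monomial, hasseDeriv_monomial, eval_monomial]
  simp [mul_comm]

/-- A nonzero `Q = ∑ p (i, l) x ^ i y ^ l` cannot vanish too much along the curves
`(u ^ N, u)` at `u = 1` and `(η u ^ N, V u)` at `u = 1`. -/
theorem add_order_le_of_ne_zero {n L N M₀ M₁ : ℕ} (hLN : L ≤ N) {p : Fin n × Fin L → ℝ}
    (hp : p ≠ 0) {η V : ℝ} (hη₀ : η ≠ 0) (hη₁ : η ≠ 1) (hV : V ≠ 0)
    (h₀ : ∀ j < M₀, ∑ e, p e * ((N * e.1 + e.2 : ℕ).choose j : ℝ) = 0)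
    (h₁ : ∀ j < M₁, ∑ e, p e * (η ^ (e.1 : ℕ) * V ^ (e.2 : ℕ)) *
      ((N * e.1 + e.2 : ℕ).choose j : ℝ) = 0) :
    M₀ + M₁ + 2 ≤ L * (n + 1) := by
  classical
  obtain ⟨e₀, he₀⟩ := Function.ne_iff.1 hp
  have hn : 0 < n := e₀.1.pos
  have hN : N ≠ 0 := by have := e₀.2.pos; omega
  set A : Fin L → ℝ[X] := fun l => ∑ i : Fin n, C (p (i, l)) * X ^ (i : ℕ) with hAdef
  set Λ : Finset (Fin L) := Finset.univ.filter fun l => A l ≠ 0 with hΛ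
  have hcoeffA : ∀ l (i : Fin n), (A l).coeff i = p (i, l) := by
    intro l i
    simp [hAdef, finsetSum_coeff, coeff_X_pow, Fin.val_inj]
  have hΛ₀ : e₀.2 ∈ Λ := by
    simp only [hΛ, Finset.mem_filter, Finset.mem_univ, true_and]
    intro h
    apply he₀
    have := hcoeffA e₀.2 e₀.1
    rw [h, coeff_zero] at this
    simpa using this.symm
  have hm : 0 < Λ.card := Finset.card_pos.2 ⟨_, hΛ₀⟩
  have hmL : Λ.card ≤ L := by simpa using Finset.card_le_univ Λ
  set ε : Fin Λ.card ≃ Λ := Λ.equivFin.symm with hε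
  have hdeg : ∀ l, (A l).natDegree ≤ n - 1 := by
    intro l
    refine natDegree_sum_le_of_forall_le _ _ fun i _ => ?_
    exact (natDegree_C_mul_X_pow_le _ _).trans (by have := i.2; omega)
  have key : ∀ (x w : ℝ) (M : ℕ), x ≠ 0 → w ≠ 0 →
      (∀ j < M, ∑ e, p e * (x ^ (e.1 : ℕ) * w ^ (e.2 : ℕ)) *
        ((N * e.1 + e.2 : ℕ).choose j : ℝ) = 0) →
      (X - C x) ^ (M - (Λ.card - 1)) ∣
        (wronskianMatrix N (fun k => ((ε k : Fin L) : ℕ)) fun k => A (ε k)).det := by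
    intro x w M hx hw h
    apply pow_dvd_det_wronskianMatrix hm hN hx hw
    have := X_sub_one_pow_dvd_of_sum_choose_eq_zero Finset.univ _ _ M h
    convert this using 1
    rw [Fintype.sum_prod_type_right, Equiv.sum_comp ε
      (fun l : Λ => (A l).comp (C x * X ^ N) * (C w * X) ^ ((l : Fin L) : ℕ)),
      Finset.sum_coe_sort Λ (fun l => (A l).comp (C x * X ^ N) * (C w * X) ^ (l : ℕ))]
    rw [Finset.sum_subset (Finset.subset_univ Λ)]
    · refine Finset.sum_congr rfl fun l _ => ?_
      simp only [hAdef, comp, eval₂_finsetSum, eval₂_mul, eval₂_C, eval₂_pow, eval₂_X, Finset.sum_mul]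
      refine Finset.sum_congr rfl fun i _ => ?_
      simp only [map_mul, map_pow]
      ring
    · intro l _ hl
      have : A l = 0 := by simpa [hΛ] using hl
      simp [this]
  have hd₀ := key 1 1 M₀ one_ne_zero one_ne_zero (by simpa using h₀)
  have hd₁ := key η V M₁ hη₀ hV h₁
  have hne : (wronskianMatrix N (fun k => ((ε k : Fin L) : ℕ)) fun k => A (ε k)).det ≠ 0 := by
    apply det_wronskianMatrix_ne_zero
    · intro a b hab
      exact ε.injective (Subtype.ext (Fin.ext hab))
    · intro k
      exact (ε k : Fin L).2.trans_le hLN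
    · intro k
      exact (Finset.mem_filter.1 (ε k).2).2
  have hcop : IsCoprime ((X - C (1 : ℝ)) ^ (M₀ - (Λ.card - 1)))
      ((X - C η) ^ (M₁ - (Λ.card - 1))) :=
    (pairwise_coprime_X_sub_C Function.injective_id hη₁.symm).pow
  have hdvd := hcop.mul_dvd hd₀ hd₁
  have hle := (natDegree_le_of_dvd hdvd hne).trans (natDegree_det_wronskianMatrix_le _ _ _)
  rw [natDegree_mul (pow_ne_zero _ (X_sub_C_ne_zero _)) (pow_ne_zero _ (X_sub_C_ne_zero _)),
    natDegree_pow, natDegree_pow, natDegree_X_sub_C, natDegree_X_sub_C] at hle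
  have hle' := hle.trans (Finset.sum_le_card_nsmul Finset.univ _ (n - 1) fun k _ => hdeg _)
  rw [Finset.card_univ, Fintype.card_fin, smul_eq_mul] at hle'
  obtain ⟨n', rfl⟩ : ∃ n', n = n' + 1 := ⟨n - 1, by omega⟩
  have : Λ.card * n' ≤ L * n' := Nat.mul_le_mul_right _ hmL
  simp only [Nat.add_sub_cancel] at hle'
  have h2 : L * (n' + 1 + 1) = L * n' + 2 * L := by ring
  omega

end ZeroEstimate

section ThueSiegel

attribute [local instance] Matrix.seminormedAddCommGroup

/-- The Siegel lemma for the conditions `∑ p e * choose (N i + l) j = 0`. -/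
theorem exists_auxiliary_coefficients {n L N : ℕ} (hn : 0 < n) (hL : 0 < L) (hLN : L ≤ N) :
    ∃ p : Fin (4 * n) × Fin L → ℤ, p ≠ 0 ∧
      (∀ j < 3 * n * L, ∑ e, (p e : ℝ) * ((N * e.1 + e.2 : ℕ).choose j : ℝ) = 0) ∧
      ∀ e, |(p e : ℝ)| ≤ 2 ^ (6 * (4 * n * N)) := by
  set A : Matrix (Fin (3 * n * L)) (Fin (4 * n) × Fin L) ℤ :=
    Matrix.of fun j e => ((N * e.1 + e.2 : ℕ).choose j : ℤ) with hA
  have hnL : 0 < n * L := Nat.mul_pos hn hL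
  obtain ⟨p, hp0, hAp, hp⟩ := Int.Matrix.exists_ne_zero_int_vec_norm_le A
    (by simp only [Fintype.card_fin, Fintype.card_prod]; nlinarith)
    (by simp only [Fintype.card_fin]; nlinarith)
  have hexp : ∀ e : Fin (4 * n) × Fin L, N * (e.1 : ℕ) + e.2 ≤ 4 * n * N := by
    intro e
    have h1 := e.1.2
    have h2 := e.2.2
    calc N * (e.1 : ℕ) + e.2 ≤ N * e.1 + N := by omega
      _ = (e.1 + 1) * N := by ring
      _ ≤ 4 * n * N := Nat.mul_le_mul_right _ h1
  refine ⟨p, hp0, fun j hj => ?_, fun e => ?_⟩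
  · have := congrFun hAp ⟨j, hj⟩
    simp only [Matrix.mulVec, dotProduct, hA, Matrix.of_apply, Pi.zero_apply] at this
    have h' := congrArg (Int.cast : ℤ → ℝ) this
    push_cast at h'
    rw [← h']
    refine Finset.sum_congr rfl fun e _ => ?_
    ring
  · have hnorm : ‖A‖ ≤ 2 ^ (4 * n * N) := by
      rw [Matrix.norm_le_iff (by positivity)]
      intro j e
      rw [hA, Matrix.of_apply, Int.norm_eq_abs]
      push_cast
      rw [abs_of_nonneg (by positivity)]
      have : (N * (e.1 : ℕ) + e.2).choose j ≤ 2 ^ (4 * n * N) :=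
        (Nat.choose_le_two_pow _ _).trans (Nat.pow_le_pow_right two_pos (hexp e))
      exact_mod_cast this
    have hmax : max 1 ‖A‖ ≤ 2 ^ (4 * n * N) :=
      max_le (one_le_pow₀ one_le_two) hnorm
    have hcard : ((Fintype.card (Fin (4 * n) × Fin L) : ℕ) : ℝ) ≤ 2 ^ (4 * n * N) := by
      have : 4 * n * L ≤ 2 ^ (4 * n * N) :=
        (Nat.mul_le_mul_left _ hLN).trans Nat.lt_two_pow_self.le
      simp only [Fintype.card_prod, Fintype.card_fin]
      exact_mod_cast this
    have hexponent : ((Fintype.card (Fin (3 * n * L)) : ℕ) : ℝ) /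
        ((Fintype.card (Fin (4 * n) × Fin L) : ℕ) - (Fintype.card (Fin (3 * n * L)) : ℕ)) =
          ((3 : ℕ) : ℝ) := by
      have : (n : ℝ) * L ≠ 0 := by exact_mod_cast hnL.ne'
      simp only [Fintype.card_prod, Fintype.card_fin]
      push_cast
      rw [div_eq_iff (by ring_nf; exact this)]
      ring
    rw [hexponent, Real.rpow_natCast] at hp
    calc |(p e : ℝ)| = ‖p e‖ := (Int.norm_eq_abs _).symm
      _ ≤ ‖p‖ := norm_le_pi_norm p e
      _ ≤ _ := hp
      _ ≤ (2 ^ (4 * n * N) * 2 ^ (4 * n * N)) ^ 3 := by gcongr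
      _ = 2 ^ (6 * (4 * n * N)) := by rw [← pow_add, ← pow_mul]; congr 1; ring

theorem abs_sum_choose_mul_pow_le {ι : Type*} (s : Finset ι) (p : ι → ℝ) (e : ι → ℕ)
    {M D j : ℕ} {P h : ℝ} (hP : ∀ i ∈ s, |p i| ≤ P) (he : ∀ i ∈ s, e i ≤ D) (hjM : j ≤ M)
    (hh : |h| ≤ 1) (hvan : ∀ m < M, ∑ i ∈ s, p i * ((e i).choose m : ℝ) = 0) :
    |∑ i ∈ s, p i * ((e i).choose j : ℝ) * (1 + h) ^ e i| ≤
      2 ^ j * ((D + 1) * (s.card * (P * 4 ^ D)) * |h| ^ (M - j)) := by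
  have hexpand : ∀ i ∈ s, p i * ((e i).choose j : ℝ) * (1 + h) ^ e i =
      (1 + h) ^ j * ∑ k ∈ Finset.range (D + 1),
        p i * ((e i).choose (k + j) : ℝ) * ((k + j).choose j : ℝ) * h ^ k := by
    intro i hi
    rcases lt_or_ge (e i) j with hlt | hge
    · rw [Nat.choose_eq_zero_of_lt hlt, Finset.sum_eq_zero]
      · simp
      · intro k _
        rw [Nat.choose_eq_zero_of_lt (by omega : e i < k + j)]
        simp
    · have hsum : (1 + h) ^ (e i - j) =
          ∑ k ∈ Finset.range (D + 1), ((e i - j).choose k : ℝ) * h ^ k := by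
        rw [add_comm, add_pow]
        rw [← Finset.sum_subset (Finset.range_subset_range.2
          (by have := he i hi; omega : e i - j + 1 ≤ D + 1))]
        · exact Finset.sum_congr rfl fun k _ => by simp [mul_comm]
        · intro k _ hk
          rw [Nat.choose_eq_zero_of_lt (by simpa using hk)]
          simp
      have hpow : (1 + h) ^ e i = (1 + h) ^ j * (1 + h) ^ (e i - j) := by
        rw [← pow_add]; congr 1; omega
      rw [hpow, hsum, mul_left_comm, Finset.mul_sum]
      congr 1
      refine Finset.sum_congr rfl fun k _ => ?_
      rcases le_or_gt (k + j) (e i) with hk | hk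
      · have := Nat.choose_mul (n := e i) (Nat.le_add_left j k)
        rw [Nat.add_sub_cancel] at this
        have h' : ((e i).choose (k + j) : ℝ) * ((k + j).choose j : ℝ) =
            ((e i).choose j : ℝ) * ((e i - j).choose k : ℝ) := by exact_mod_cast this
        linear_combination -(p i * h ^ k) * h'
      · rw [Nat.choose_eq_zero_of_lt hk, Nat.choose_eq_zero_of_lt (by omega : e i - j < k)]
        simp
  rw [Finset.sum_congr rfl hexpand, ← Finset.mul_sum, Finset.sum_comm, abs_mul, abs_pow]
  have h1 : |1 + h| ≤ 2 := by
    calc |1 + h| ≤ |1| + |h| := abs_add_le _ _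
      _ ≤ 2 := by rw [abs_one]; linarith
  have hterm : ∀ k ∈ Finset.range (D + 1),
      |∑ i ∈ s, p i * ((e i).choose (k + j) : ℝ) * ((k + j).choose j : ℝ) * h ^ k| ≤
        (s.card * (P * 4 ^ D)) * |h| ^ (M - j) := by
    intro k _
    have hP0 : 0 ≤ (s.card : ℝ) * (P * 4 ^ D) := by
      rcases s.eq_empty_or_nonempty with rfl | ⟨i, hi⟩
      · simp
      · have := (abs_nonneg _).trans (hP i hi)
        positivity
    rcases lt_or_ge (k + j) M with hlt | hge
    · have : ∑ i ∈ s, p i * ((e i).choose (k + j) : ℝ) * ((k + j).choose j : ℝ) * h ^ k = 0 := by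
        rw [← Finset.sum_mul, ← Finset.sum_mul, hvan _ hlt]; simp
      rw [this, abs_zero]
      positivity
    · rw [← Finset.sum_mul, abs_mul, abs_pow]
      refine mul_le_mul ?_ (pow_le_pow_of_le_one (abs_nonneg h) hh (by omega))
        (by positivity) hP0
      refine (Finset.abs_sum_le_sum_abs _ _).trans ?_
      rw [← nsmul_eq_mul]
      refine Finset.sum_le_card_nsmul _ _ _ fun i hi => ?_
      rw [mul_assoc, abs_mul]
      refine mul_le_mul (hP i hi) ?_ (abs_nonneg _) ((abs_nonneg _).trans (hP i hi))
      rw [abs_of_nonneg (by positivity)]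
      rcases le_or_gt (k + j) (e i) with hk | hk
      · have hle : (e i).choose (k + j) * (k + j).choose j ≤ 2 ^ D * 2 ^ D :=
          Nat.mul_le_mul
            ((Nat.choose_le_two_pow _ _).trans (Nat.pow_le_pow_right two_pos (he i hi)))
            ((Nat.choose_le_two_pow _ _).trans
              (Nat.pow_le_pow_right two_pos (hk.trans (he i hi))))
        rw [← mul_pow] at hle
        exact_mod_cast hle
      · rw [Nat.choose_eq_zero_of_lt hk]
        simp
  refine mul_le_mul (pow_le_pow_left₀ (abs_nonneg _) h1 _) ?_ (abs_nonneg _) (by positivity)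
  refine (Finset.abs_sum_le_sum_abs _ _).trans ((Finset.sum_le_card_nsmul _ _ _ hterm).trans ?_)
  rw [Finset.card_range, nsmul_eq_mul]
  push_cast
  exact le_of_eq (by ring)

theorem abs_one_add_pow_sub_one_le {τ : ℝ} (hτ : |τ| ≤ 1) (i : ℕ) :
    |(1 + τ) ^ i - 1| ≤ 2 ^ i * |τ| := by
  suffices h : |(1 + τ) ^ i - 1| ≤ (2 ^ i - 1) * |τ| from
    h.trans (mul_le_mul_of_nonneg_right (by linarith) (abs_nonneg τ))
  induction i with
  | zero => simp
  | succ i ih =>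
    have h1 : |1 + τ| ≤ 2 := by
      calc |1 + τ| ≤ |1| + |τ| := abs_add_le _ _
        _ ≤ 2 := by rw [abs_one]; linarith
    calc |(1 + τ) ^ (i + 1) - 1| = |((1 + τ) ^ i - 1) * (1 + τ) + τ| := by ring_nf
      _ ≤ |(1 + τ) ^ i - 1| * |1 + τ| + |τ| := by
        rw [← abs_mul]; exact abs_add_le _ _
      _ ≤ ((2 ^ i - 1) * |τ|) * 2 + |τ| := by
        gcongr
        exact (abs_nonneg _).trans ih
      _ = (2 ^ (i + 1) - 1) * |τ| := by ring

/-- The value at `(c / d, a / b)` of an integral polynomial, when nonzero, is bounded below. -/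
theorem one_le_mul_abs_sum {n L a b c d : ℕ} (hb : 0 < b) (hd : 0 < d)
    (w : Fin n × Fin L → ℤ)
    (hw : ∑ e, (w e : ℝ) * (((c : ℝ) / d) ^ (e.1 : ℕ) * ((a : ℝ) / b) ^ (e.2 : ℕ)) ≠ 0) :
    1 ≤ (d : ℝ) ^ n * (b : ℝ) ^ L *
      |∑ e, (w e : ℝ) * (((c : ℝ) / d) ^ (e.1 : ℕ) * ((a : ℝ) / b) ^ (e.2 : ℕ))| := by
  set Z := ∑ e, (w e : ℝ) * (((c : ℝ) / d) ^ (e.1 : ℕ) * ((a : ℝ) / b) ^ (e.2 : ℕ))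
  have hb' : (b : ℝ) ≠ 0 := by exact_mod_cast hb.ne'
  have hd' : (d : ℝ) ≠ 0 := by exact_mod_cast hd.ne'
  have hcast : (d : ℝ) ^ n * (b : ℝ) ^ L * Z =
      ((∑ e : Fin n × Fin L, w e * (c ^ (e.1 : ℕ) * d ^ (n - e.1) *
        (a ^ (e.2 : ℕ) * b ^ (L - e.2))) : ℤ) : ℝ) := by
    push_cast
    rw [Finset.mul_sum]
    refine Finset.sum_congr rfl fun e _ => ?_
    have h1 : (d : ℝ) ^ n = d ^ (e.1 : ℕ) * d ^ (n - e.1) := by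
      rw [← pow_add]; congr 1; have := e.1.2; omega
    have h2 : (b : ℝ) ^ L = b ^ (e.2 : ℕ) * b ^ (L - e.2) := by
      rw [← pow_add]; congr 1; have := e.2.2; omega
    rw [h1, h2, div_pow, div_pow]
    field_simp
  have hpos : (0 : ℝ) < (d : ℝ) ^ n * (b : ℝ) ^ L := by positivity
  rw [← abs_of_pos hpos, ← abs_mul, hcast, ← Int.cast_abs]
  have hne : (d : ℝ) ^ n * (b : ℝ) ^ L * Z ≠ 0 := mul_ne_zero hpos.ne' hw
  rw [hcast] at hne
  exact_mod_cast Int.one_le_abs (by exact_mod_cast hne)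

theorem one_le_of_rational_approximation {n L N a b c d : ℕ} {τ : ℝ} (hn : 0 < n) (hL : 0 < L)
    (hLN : L ≤ N) (ha : 0 < a) (hb : 0 < b) (hc : 0 < c) (hd : 0 < d) (hcd : c ≠ d)
    (hab : |(a : ℝ) / b - 1| ≤ 1) (hτ : |τ| ≤ 1)
    (hη : (c : ℝ) / d = ((a : ℝ) / b) ^ N * (1 + τ)) :
    1 ≤ (d : ℝ) ^ (4 * n) * (b : ℝ) ^ L *
      (2 ^ (11 * (4 * n * N)) * (|(a : ℝ) / b - 1| ^ (n * L) + |τ|)) := by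
  have hd' : (d : ℝ) ≠ 0 := by exact_mod_cast hd.ne'
  have hV0 : (a : ℝ) / b ≠ 0 := by positivity
  have hη0 : (c : ℝ) / d ≠ 0 := by positivity
  have hη1 : (c : ℝ) / d ≠ 1 := by
    rw [Ne, div_eq_one_iff_eq hd']; exact_mod_cast hcd
  obtain ⟨p, hp0, hvan, hp⟩ := exists_auxiliary_coefficients hn hL hLN
  have hexists : ∃ j < L * (n + 1), ∑ e : Fin (4 * n) × Fin L, (p e : ℝ) *
      (((c : ℝ) / d) ^ (e.1 : ℕ) * ((a : ℝ) / b) ^ (e.2 : ℕ)) *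
        ((N * e.1 + e.2 : ℕ).choose j : ℝ) ≠ 0 := by
    by_contra! hcon
    have := add_order_le_of_ne_zero hLN (p := fun e => (p e : ℝ))
      (fun h => hp0 (funext fun e => by simpa using congrFun h e)) hη0 hη1 hV0 hvan hcon
    nlinarith
  obtain ⟨j, hj, hZ⟩ := hexists
  have hnL : 0 < n * L := Nat.mul_pos hn hL
  have hLnL : L ≤ n * L := Nat.le_mul_of_pos_left _ hn
  have hnLN : n * L ≤ n * N := Nat.mul_le_mul_left _ hLN
  have hnnN : n ≤ n * N := Nat.le_mul_of_pos_right _ (hL.trans_le hLN)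
  have hjnL : j < 2 * (n * L) := by nlinarith
  have hrw : ∀ e : Fin (4 * n) × Fin L, (p e : ℝ) *
      (((c : ℝ) / d) ^ (e.1 : ℕ) * ((a : ℝ) / b) ^ (e.2 : ℕ)) *
        ((N * e.1 + e.2 : ℕ).choose j : ℝ) =
      ((p e * ((N * e.1 + e.2 : ℕ).choose j : ℤ) : ℤ) : ℝ) *
        (((c : ℝ) / d) ^ (e.1 : ℕ) * ((a : ℝ) / b) ^ (e.2 : ℕ)) := by
    intro e; push_cast; ring
  have hlow := one_le_mul_abs_sum (a := a) (c := c) hb hd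
    (fun e : Fin (4 * n) × Fin L => p e * ((N * e.1 + e.2 : ℕ).choose j : ℤ))
    (by rwa [← Finset.sum_congr rfl fun e _ => hrw e])
  rw [← Finset.sum_congr rfl fun e _ => hrw e] at hlow
  refine hlow.trans ?_
  gcongr
  set h := (a : ℝ) / b - 1 with hh
  have hV : (a : ℝ) / b = 1 + h := by rw [hh]; ring
  set W := 4 * n * N with hW
  have hWn : 4 * n ≤ W := by rw [hW]; nlinarith
  have hWnL : 4 * n * L ≤ W := by rw [hW]; nlinarith
  have hexp : ∀ e : Fin (4 * n) × Fin L, N * (e.1 : ℕ) + e.2 ≤ W := by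
    intro e
    have h1 := e.1.2
    have h2 := e.2.2
    calc N * (e.1 : ℕ) + e.2 ≤ N * e.1 + N := by omega
      _ = (e.1 + 1) * N := by ring
      _ ≤ 4 * n * N := Nat.mul_le_mul_right _ h1
  have hcard : ((Finset.univ : Finset (Fin (4 * n) × Fin L)).card : ℝ) ≤ 2 ^ W := by
    have : 4 * n * L ≤ 2 ^ W := hWnL.trans Nat.lt_two_pow_self.le
    simp only [Finset.card_univ, Fintype.card_prod, Fintype.card_fin]
    exact_mod_cast this
  have hmain := abs_sum_choose_mul_pow_le Finset.univ (fun e => (p e : ℝ))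
    (fun e : Fin (4 * n) × Fin L => N * (e.1 : ℕ) + e.2) (M := 3 * n * L) (D := W) (j := j)
    (P := 2 ^ (6 * W)) (h := h) (fun e _ => hp e) (fun e _ => hexp e) (by nlinarith) hab hvan
  have hrest : |∑ e : Fin (4 * n) × Fin L, (p e : ℝ) * ((N * e.1 + e.2 : ℕ).choose j : ℝ) *
      (1 + h) ^ (N * (e.1 : ℕ) + e.2) * ((1 + τ) ^ (e.1 : ℕ) - 1)| ≤ 2 ^ (11 * W) * |τ| := by
    have hterm : ∀ e ∈ (Finset.univ : Finset (Fin (4 * n) × Fin L)),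
        |(p e : ℝ) * ((N * e.1 + e.2 : ℕ).choose j : ℝ) *
          (1 + h) ^ (N * (e.1 : ℕ) + e.2) * ((1 + τ) ^ (e.1 : ℕ) - 1)| ≤
          2 ^ (6 * W) * 2 ^ W * 2 ^ W * (2 ^ W * |τ|) := by
      intro e _
      have h1 : |1 + h| ≤ 2 := by
        calc |1 + h| ≤ |1| + |h| := abs_add_le _ _
          _ ≤ 2 := by rw [abs_one]; linarith
      have h2 : ((N * (e.1 : ℕ) + e.2).choose j : ℝ) ≤ 2 ^ W := by
        exact_mod_cast (Nat.choose_le_two_pow _ _).trans (Nat.pow_le_pow_right two_pos (hexp e))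
      have h3 : |1 + h| ^ (N * (e.1 : ℕ) + e.2) ≤ 2 ^ W :=
        (pow_le_pow_left₀ (abs_nonneg _) h1 _).trans
          (pow_le_pow_right₀ one_le_two (hexp e))
      have h4 : |(1 + τ) ^ (e.1 : ℕ) - 1| ≤ 2 ^ W * |τ| :=
        (abs_one_add_pow_sub_one_le hτ _).trans (mul_le_mul_of_nonneg_right
          (pow_le_pow_right₀ one_le_two (by have := e.1.2; omega)) (abs_nonneg _))
      rw [abs_mul, abs_mul, abs_mul, abs_pow, Nat.abs_cast]
      have := hp e
      gcongr
    refine (Finset.abs_sum_le_sum_abs _ _).trans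
      ((Finset.sum_le_card_nsmul _ _ _ hterm).trans ?_)
    rw [nsmul_eq_mul]
    calc _ ≤ 2 ^ W * (2 ^ (6 * W) * 2 ^ W * 2 ^ W * (2 ^ W * |τ|)) := by gcongr
      _ = 2 ^ (10 * W) * |τ| := by ring
      _ ≤ 2 ^ (11 * W) * |τ| := by
        gcongr
        · exact one_le_two
        · norm_num
  have hsplit : ∑ e : Fin (4 * n) × Fin L, (p e : ℝ) *
      (((c : ℝ) / d) ^ (e.1 : ℕ) * ((a : ℝ) / b) ^ (e.2 : ℕ)) *
        ((N * e.1 + e.2 : ℕ).choose j : ℝ) =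
      ∑ e : Fin (4 * n) × Fin L, (p e : ℝ) * ((N * e.1 + e.2 : ℕ).choose j : ℝ) *
        (1 + h) ^ (N * (e.1 : ℕ) + e.2) +
      ∑ e : Fin (4 * n) × Fin L, (p e : ℝ) * ((N * e.1 + e.2 : ℕ).choose j : ℝ) *
      (1 + h) ^ (N * (e.1 : ℕ) + e.2) * ((1 + τ) ^ (e.1 : ℕ) - 1) := by
    rw [← Finset.sum_add_distrib]
    refine Finset.sum_congr rfl fun e _ => ?_
    rw [hη, hV, mul_pow, ← pow_mul, pow_add]
    ring
  rw [hsplit, mul_add]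
  refine (abs_add_le _ _).trans (add_le_add (hmain.trans ?_) hrest)
  have hj2 : (2 : ℝ) ^ j ≤ 2 ^ W := pow_le_pow_right₀ one_le_two (by nlinarith)
  have hD : (W : ℝ) + 1 ≤ 2 ^ W := by
    exact_mod_cast (Nat.lt_two_pow_self : W < 2 ^ W)
  have h4 : (4 : ℝ) ^ W = 2 ^ (2 * W) := by rw [pow_mul (2 : ℝ) 2 W]; norm_num
  calc _ ≤ 2 ^ W * (2 ^ W * (2 ^ W * (2 ^ (6 * W) * 2 ^ (2 * W))) * |h| ^ (n * L)) := by
        rw [h4]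
        have : |h| ^ (3 * n * L - j) ≤ |h| ^ (n * L) :=
          pow_le_pow_of_le_one (abs_nonneg h) hab (Nat.le_sub_of_add_le (by nlinarith))
        generalize (Finset.univ : Finset (Fin (4 * n) × Fin L)).card = κ at hcard ⊢
        gcongr
    _ = 2 ^ (11 * W) * |h| ^ (n * L) := by ring

theorem abs_sub_one_le_abs_pow_sub_one {y : ℝ} (hy : 0 ≤ y) {N : ℕ} (hN : N ≠ 0) :
    |y - 1| ≤ |y ^ N - 1| := by
  rcases le_total y 1 with h | h
  · have := pow_le_of_le_one hy h hN
    rw [abs_of_nonpos (by linarith), abs_of_nonpos (by linarith)]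
    linarith
  · have := le_self_pow₀ h hN
    rw [abs_of_nonneg (by linarith), abs_of_nonneg (by linarith)]
    linarith

theorem exp_neg_le_abs_div_sub_one {a b : ℕ} (hb : 0 < b) (hab : a ≠ b) {Γ : ℝ}
    (hΓ : Real.log b ≤ Γ) : Real.exp (-Γ) ≤ |(a : ℝ) / b - 1| := by
  have hb' : (0 : ℝ) < b := by exact_mod_cast hb
  have hcast : (1 : ℝ) ≤ |(a : ℝ) - b| := by
    have : (1 : ℤ) ≤ |(a : ℤ) - b| := Int.one_le_abs (by omega)
    exact_mod_cast this
  have hexp : Real.exp (-Γ) ≤ 1 / b := by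
    rw [Real.exp_neg, ← one_div]
    exact one_div_le_one_div_of_le hb' ((Real.log_le_iff_le_exp hb').1 hΓ)
  have heq : (a : ℝ) / b - 1 = (a - b) / b := by field_simp
  rw [heq, abs_div, abs_of_pos hb']
  exact hexp.trans (div_le_div_of_nonneg_right hcast hb'.le)

/-- An effective irrationality-type estimate: if `a / b` is sufficiently close to `1`, then its
large powers `(a / b) ^ N` are not well approximated by rationals `c / d` of small height. -/
theorem exp_neg_lt_of_rational_approximation {C ε lam Γ τ : ℝ} {N a b c d : ℕ} (hC : 0 ≤ C)
    (hε : 0 < ε) (hε1 : ε ≤ 1) (hlam : 128 * (C + 9) ≤ ε * lam) (hN : 8 ≤ ε * N)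
    (ha : 0 < a) (hb : 0 < b) (hc : 0 < c) (hd : 0 < d) (hab : a ≠ b)
    (haΓ : Real.log a ≤ Γ) (hbΓ : Real.log b ≤ Γ) (hdC : Real.log d ≤ C * N)
    (hV : |(a : ℝ) / b - 1| ≤ Real.exp (-lam))
    (hη : (c : ℝ) / d = ((a : ℝ) / b) ^ N * (1 + τ)) :
    Real.exp (-(ε * N * Γ)) < |τ| := by
  by_contra! hτ
  have ha' : (0 : ℝ) < a := by exact_mod_cast ha
  have hb' : (0 : ℝ) < b := by exact_mod_cast hb
  have hd' : (0 : ℝ) < d := by exact_mod_cast hd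
  have hlam0 : 1 ≤ lam := by nlinarith
  have hlamΓ : lam ≤ Γ := by
    have := Real.exp_le_exp.1 ((exp_neg_le_abs_div_sub_one hb hab hbΓ).trans hV)
    linarith
  have hεNΓ : 8 * Γ ≤ ε * N * Γ := mul_le_mul_of_nonneg_right hN (by linarith)
  have hN0 : 0 < (N : ℝ) := by
    by_contra! h
    nlinarith
  have hτ1 : |τ| ≤ 1 := hτ.trans (Real.exp_le_one_iff.2 (by linarith))
  have hab1 : |(a : ℝ) / b - 1| ≤ 1 := hV.trans (Real.exp_le_one_iff.2 (by linarith))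
  have hcd : c ≠ d := by
    rintro rfl
    have h1 : ((b : ℝ) / a) ^ N = 1 + τ := by
      rw [div_self hd'.ne', div_pow] at hη
      rw [div_pow]
      field_simp at hη ⊢
      linarith
    have h2 := abs_sub_one_le_abs_pow_sub_one (y := (b : ℝ) / a) (by positivity)
      (N := N) (by exact_mod_cast hN0.ne')
    rw [h1, add_sub_cancel_left] at h2
    have h3 := Real.exp_le_exp.1
      (((exp_neg_le_abs_div_sub_one ha hab.symm haΓ).trans h2).trans hτ)
    linarith
  set L := ⌊ε * N / 4⌋₊ with hLdef
  set n := ⌈4 * Γ / lam⌉₊ with hndef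
  have hL1 : (L : ℝ) ≤ ε * N / 4 := Nat.floor_le (by positivity)
  have hL2 : ε * N / 8 ≤ L := by
    have := Nat.lt_floor_add_one (ε * N / 4)
    rw [← hLdef] at this
    linarith
  have hn1 : 4 * Γ ≤ lam * n := by
    have := Nat.le_ceil (4 * Γ / lam)
    rw [← hndef, div_le_iff₀ (by linarith)] at this
    linarith
  have hn2 : lam * n ≤ 5 * Γ := by
    have := Nat.ceil_lt_add_one (a := 4 * Γ / lam)
      (div_nonneg (by linarith) (by linarith))
    rw [← hndef, ← sub_lt_iff_lt_add, lt_div_iff₀ (by linarith)] at this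
    linarith
  have hL0 : 0 < L := by
    have : (0 : ℝ) < L := by linarith
    exact_mod_cast this
  have hn0 : 0 < n := by
    by_contra! h
    have : (n : ℝ) = 0 := by exact_mod_cast (Nat.le_zero.1 h)
    rw [this] at hn1
    linarith
  have hLN : L ≤ N := by
    have : (L : ℝ) ≤ N := by nlinarith
    exact_mod_cast this
  have hmain := one_le_of_rational_approximation hn0 hL0 hLN ha hb hc hd hcd hab1 hτ1 hη
  have hnR : (1 : ℝ) ≤ n := by exact_mod_cast hn0
  have hLR : (1 : ℝ) ≤ L := by exact_mod_cast hL0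
  have hNR : (1 : ℝ) ≤ N := hLR.trans (by exact_mod_cast hLN)
  have hnN : (1 : ℝ) ≤ n * N := one_le_mul_of_one_le_of_one_le hnR hNR
  have hdpow : (d : ℝ) ^ (4 * n) ≤ Real.exp (4 * C * (n * N)) := by
    calc (d : ℝ) ^ (4 * n) ≤ Real.exp (C * N) ^ (4 * n) :=
          pow_le_pow_left₀ hd'.le ((Real.log_le_iff_le_exp hd').1 hdC) _
      _ = _ := by rw [← Real.exp_nat_mul]; push_cast; ring_nf
  have hbpow : (b : ℝ) ^ L ≤ Real.exp (Γ * L) := by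
    calc (b : ℝ) ^ L ≤ Real.exp Γ ^ L :=
          pow_le_pow_left₀ hb'.le ((Real.log_le_iff_le_exp hb').1 hbΓ) _
      _ = _ := by rw [← Real.exp_nat_mul]; ring_nf
  have htwo : (2 : ℝ) ^ (11 * (4 * n * N)) ≤ Real.exp (32 * (n * N)) := by
    rw [← Real.log_le_iff_le_exp (by positivity), Real.log_pow]
    push_cast
    have := Real.log_two_lt_d9
    nlinarith
  have hhpow : |(a : ℝ) / b - 1| ^ (n * L) ≤ Real.exp (-(lam * (n * L))) := by
    calc |(a : ℝ) / b - 1| ^ (n * L) ≤ Real.exp (-lam) ^ (n * L) :=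
          pow_le_pow_left₀ (abs_nonneg _) hV _
      _ = _ := by rw [← Real.exp_nat_mul]; push_cast; ring_nf
  set E := 4 * (C + 8) * (n * N) + Γ * L with hE
  have hbound : 1 ≤ Real.exp (E - lam * (n * L)) + Real.exp (E - ε * N * Γ) := by
    calc (1 : ℝ) ≤ _ := hmain
      _ ≤ Real.exp (4 * C * (n * N)) * Real.exp (Γ * L) * (Real.exp (32 * (n * N)) *
          (Real.exp (-(lam * (n * L))) + Real.exp (-(ε * N * Γ)))) := by gcongr
      _ = _ := by
        rw [mul_add, mul_add, ← Real.exp_add, ← Real.exp_add, ← Real.exp_add, ← Real.exp_add,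
          ← Real.exp_add, hE]
        ring_nf
  have hΓL : Γ * L ≤ lam * (n * L) / 4 := by
    have := mul_le_mul_of_nonneg_right hn1 (Nat.cast_nonneg (α := ℝ) L)
    linarith
  have hfirst : E - lam * (n * L) ≤ -1 := by
    have h1 : 16 * (C + 9) * N ≤ lam * L := by
      have h1 := mul_le_mul_of_nonneg_right hlam (Nat.cast_nonneg (α := ℝ) N)
      have h2 := mul_le_mul_of_nonneg_right hL2 (by linarith : 0 ≤ lam)
      linarith
    have h2 := mul_le_mul_of_nonneg_right h1 (Nat.cast_nonneg (α := ℝ) n)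
    have h3 : 0 ≤ lam * (n * L) := by positivity
    rw [hE]
    linarith
  have hsecond : E - ε * N * Γ ≤ -1 := by
    have h1 : 128 * (C + 9) * (n * N) ≤ ε * N * (5 * Γ) := by
      calc 128 * (C + 9) * (n * N) ≤ ε * lam * (n * N) := by gcongr
        _ = ε * N * (lam * n) := by ring
        _ ≤ ε * N * (5 * Γ) := by gcongr
    have h2 := mul_le_mul_of_nonneg_right hL1 (by linarith : 0 ≤ Γ)
    have h3 : 0 ≤ ε * N * Γ := by linarith
    rw [hE]
    linarith
  have hexp1 : Real.exp (-1) < 1 / 2 := by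
    have := Real.exp_neg_one_lt_d9
    linarith
  have h1 := Real.exp_le_exp.2 hfirst
  have h2 := Real.exp_le_exp.2 hsecond
  linarith

end ThueSiegel

section SmoothNumbers

/-- The numerator of `∏ p ∈ S, p ^ c p` for an integral exponent vector `c`. -/
def primePowProd (S : Finset ℕ) (c : ℕ → ℤ) : ℕ := ∏ p ∈ S, p ^ (c p).toNat

variable {S : Finset ℕ}

theorem primePowProd_pos (hS : ∀ p ∈ S, p.Prime) (c : ℕ → ℤ) : 0 < primePowProd S c :=
  Finset.prod_pos fun p hp => pow_pos (hS p hp).pos _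

theorem log_primePowProd (hS : ∀ p ∈ S, p.Prime) (c : ℕ → ℤ) :
    Real.log (primePowProd S c) = ∑ p ∈ S, ((c p).toNat : ℝ) * Real.log p := by
  rw [primePowProd]
  push_cast
  rw [Real.log_prod fun p hp => pow_ne_zero _ (by exact_mod_cast (hS p hp).ne_zero)]
  exact Finset.sum_congr rfl fun p _ => Real.log_pow _ _

theorem log_primePowProd_le (hS : ∀ p ∈ S, p.Prime) {c : ℕ → ℤ} {M : ℝ} (hM : 0 ≤ M)
    (hc : ∀ p ∈ S, (c p : ℝ) ≤ M) :
    Real.log (primePowProd S c) ≤ M * ∑ p ∈ S, Real.log p := by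
  rw [log_primePowProd hS, Finset.mul_sum]
  refine Finset.sum_le_sum fun p hp => mul_le_mul_of_nonneg_right ?_ (Real.log_natCast_nonneg p)
  have : (((c p).toNat : ℤ) : ℝ) = max (c p : ℝ) 0 := by
    rw [Int.toNat_eq_max]; push_cast; rfl
  rw [← Int.cast_natCast, this]
  exact max_le (hc p hp) hM

theorem primePowProd_div (hS : ∀ p ∈ S, p.Prime) (c : ℕ → ℤ) :
    (primePowProd S c : ℝ) / primePowProd S (-c) = Real.exp (∑ p ∈ S, (c p : ℝ) * Real.log p) := by
  have h1 : (0 : ℝ) < primePowProd S c := by exact_mod_cast primePowProd_pos hS c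
  have h2 : (0 : ℝ) < primePowProd S (-c) := by exact_mod_cast primePowProd_pos hS (-c)
  rw [← Real.exp_log (div_pos h1 h2), Real.log_div h1.ne' h2.ne', log_primePowProd hS,
    log_primePowProd hS, ← Finset.sum_sub_distrib]
  congr 1
  refine Finset.sum_congr rfl fun p _ => ?_
  have : (c p : ℝ) = ((c p).toNat : ℝ) - ((-c p).toNat : ℝ) := by
    exact_mod_cast (Int.toNat_sub_toNat_neg (c p)).symm
  rw [← sub_mul, Pi.neg_apply, ← this]

theorem dvd_primePowProd_iff (hS : ∀ p ∈ S, p.Prime) {c : ℕ → ℤ} {p : ℕ} (hp : p ∈ S) :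
    p ∣ primePowProd S c ↔ 0 < c p := by
  constructor
  · intro h
    obtain ⟨r, hr, hpr⟩ := ((hS p hp).prime.dvd_finsetProd_iff _).1 h
    have hpr' : p = r := (Nat.prime_dvd_prime_iff_eq (hS p hp) (hS r hr)).1
      ((hS p hp).dvd_of_dvd_pow hpr)
    subst hpr'
    by_contra! hc
    rw [Int.toNat_of_nonpos hc, pow_zero] at hpr
    exact (hS p hp).one_lt.ne' (Nat.dvd_one.1 hpr)
  · intro h
    exact (dvd_pow_self p (by omega)).trans (Finset.dvd_prod_of_mem _ hp)

theorem primePowProd_ne_neg (hS : ∀ p ∈ S, p.Prime) {c : ℕ → ℤ} {p : ℕ} (hp : p ∈ S)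
    (hc : c p ≠ 0) : primePowProd S (-c) ≠ primePowProd S c := by
  intro h
  have h1 := dvd_primePowProd_iff hS (c := c) hp
  have h2 := dvd_primePowProd_iff hS (c := -c) hp
  rw [h, h1, Pi.neg_apply] at h2
  omega

theorem log_eq_sum_factorization (hS : ∀ p ∈ S, p.Prime) {X : ℕ} (hX : 0 < X)
    (hsmooth : ∀ p : ℕ, p.Prime → p ∣ X → p ∈ S) :
    Real.log X = ∑ p ∈ S, (X.factorization p : ℝ) * Real.log p := by
  conv_lhs => rw [← Nat.prod_factorization_pow_eq_self hX.ne']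
  rw [Finsupp.prod_of_support_subset (s := S) _
    (fun p hp => hsmooth p (Nat.prime_of_mem_primeFactors hp) (Nat.dvd_of_mem_primeFactors hp))
    _ (fun _ _ => pow_zero _)]
  push_cast
  rw [Real.log_prod fun p hp => pow_ne_zero _ (by exact_mod_cast (hS p hp).ne_zero)]
  exact Finset.sum_congr rfl fun p _ => Real.log_pow _ _

theorem factorization_le_two_mul_log {X : ℕ} (hX : 0 < X) (p : ℕ) :
    (X.factorization p : ℝ) ≤ 2 * Real.log X := by
  by_cases hp : p.Prime
  · have h1 : 2 ^ X.factorization p ≤ X :=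
      (Nat.pow_le_pow_left hp.two_le _).trans (Nat.ordProj_le p hX.ne')
    have h2 : Real.log ((2 : ℝ) ^ X.factorization p) ≤ Real.log X :=
      Real.log_le_log (by positivity) (by exact_mod_cast h1)
    rw [Real.log_pow] at h2
    have h3 := Real.log_two_gt_d9
    have h4 : (0 : ℝ) ≤ X.factorization p := Nat.cast_nonneg _
    nlinarith
  · rw [Nat.factorization_eq_zero_of_not_prime _ hp, Nat.cast_zero]
    have := Real.log_natCast_nonneg X
    linarith

/-- Simultaneous approximation of the multiples of `β` by integral vectors on which the linear
form `∑ p ∈ S, c p * w p` is small. -/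
theorem exists_integral_vector_sum_small {w β : ℕ → ℝ} (hw : ∀ p ∈ S, 0 ≤ w p) {K R : ℕ}
    (hK : 0 < K) (hβ : 0 ≤ ∑ p ∈ S, β p * w p) (hβ' : K * R * ∑ p ∈ S, β p * w p ≤ 1) :
    ∃ T : ℕ, R ≤ T ∧ T ≤ K * R ∧ ∃ c : ℕ → ℤ, (∀ p, |(c p : ℝ) - T * β p| < 1) ∧
      |∑ p ∈ S, (c p : ℝ) * w p| ≤ (∑ p ∈ S, w p + 2) / K := by
  set Λ := ∑ p ∈ S, w p with hΛdef
  set σ := ∑ p ∈ S, β p * w p with hσ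
  have hΛ : 0 ≤ Λ := Finset.sum_nonneg hw
  have hK' : (0 : ℝ) < K := by exact_mod_cast hK
  set φ : ℕ → ℝ := fun i => ∑ p ∈ S, (⌊((i * R : ℕ) : ℝ) * β p⌋ : ℝ) * w p with hφ
  have hφ1 : ∀ i ≤ K, φ i ≤ 1 := by
    intro i hi
    calc φ i ≤ ∑ p ∈ S, ((i * R : ℕ) : ℝ) * β p * w p :=
          Finset.sum_le_sum fun p hp => mul_le_mul_of_nonneg_right (Int.floor_le _) (hw p hp)
      _ = ((i * R : ℕ) : ℝ) * σ := by
        rw [hσ, Finset.mul_sum]; exact Finset.sum_congr rfl fun p _ => by ring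
      _ ≤ K * R * σ := by
        refine mul_le_mul_of_nonneg_right ?_ hβ
        exact_mod_cast Nat.mul_le_mul_right R hi
      _ ≤ 1 := hβ'
  have hφ2 : ∀ i, -Λ ≤ φ i := by
    intro i
    have h0 : 0 ≤ ((i * R : ℕ) : ℝ) * σ := by positivity
    have : ((i * R : ℕ) : ℝ) * σ - Λ ≤ φ i := by
      rw [hσ, hΛdef, Finset.mul_sum, ← Finset.sum_sub_distrib]
      refine Finset.sum_le_sum fun p hp => ?_
      have := mul_le_mul_of_nonneg_right (Int.sub_one_lt_floor (((i * R : ℕ) : ℝ) * β p)).le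
        (hw p hp)
      linarith
    linarith
  set g : ℕ → ℕ := fun i => ⌊(φ i + Λ) * K / (Λ + 2)⌋₊ with hg
  have hg0 : ∀ i, 0 ≤ (φ i + Λ) * K / (Λ + 2) := fun i =>
    div_nonneg (mul_nonneg (by linarith [hφ2 i]) hK'.le) (by linarith)
  have hmaps : ∀ i ∈ Finset.range (K + 1), g i ∈ Finset.range K := by
    intro i hi
    rw [Finset.mem_range] at hi ⊢
    rw [hg, Nat.floor_lt (hg0 i), div_lt_iff₀ (by linarith), mul_comm]
    exact mul_lt_mul_of_pos_left (by linarith [hφ1 i (by omega)]) hK'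
  have hpigeon : ∃ i j, i < j ∧ j ≤ K ∧ g i = g j := by
    obtain ⟨i, hi, j, hj, hij, hgij⟩ :=
      Finset.exists_ne_map_eq_of_card_lt_of_maps_to (by simp) hmaps
    rw [Finset.mem_range] at hi hj
    rcases lt_or_gt_of_ne hij with h | h
    · exact ⟨i, j, h, by omega, hgij⟩
    · exact ⟨j, i, h, by omega, hgij.symm⟩
  obtain ⟨i, j, hij, hjK, hgij⟩ := hpigeon
  refine ⟨(j - i) * R, Nat.le_mul_of_pos_left _ (by omega), Nat.mul_le_mul_right _ (by omega),
    fun p => ⌊((j * R : ℕ) : ℝ) * β p⌋ - ⌊((i * R : ℕ) : ℝ) * β p⌋, fun p => ?_, ?_⟩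
  · have h1 := Int.floor_le (((j * R : ℕ) : ℝ) * β p)
    have h2 := Int.lt_floor_add_one (((j * R : ℕ) : ℝ) * β p)
    have h3 := Int.floor_le (((i * R : ℕ) : ℝ) * β p)
    have h4 := Int.lt_floor_add_one (((i * R : ℕ) : ℝ) * β p)
    have h5 : (((j - i) * R : ℕ) : ℝ) * β p =
        ((j * R : ℕ) : ℝ) * β p - ((i * R : ℕ) : ℝ) * β p := by
      push_cast [Nat.cast_sub hij.le]; ring
    rw [h5, abs_lt]
    push_cast at *
    constructor <;> linarith
  · have hdiff : ∑ p ∈ S, ((⌊((j * R : ℕ) : ℝ) * β p⌋ - ⌊((i * R : ℕ) : ℝ) * β p⌋ : ℤ) : ℝ) *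
        w p = φ j - φ i := by
      rw [hφ, ← Finset.sum_sub_distrib]
      exact Finset.sum_congr rfl fun p _ => by push_cast; ring
    rw [hdiff]
    have hlt : |(φ j + Λ) * K / (Λ + 2) - (φ i + Λ) * K / (Λ + 2)| < 1 := by
      have h1 := Nat.floor_le (hg0 i)
      have h2 := Nat.lt_floor_add_one ((φ i + Λ) * K / (Λ + 2))
      have h3 := Nat.floor_le (hg0 j)
      have h4 := Nat.lt_floor_add_one ((φ j + Λ) * K / (Λ + 2))
      have h5 : (⌊(φ i + Λ) * K / (Λ + 2)⌋₊ : ℝ) = ⌊(φ j + Λ) * K / (Λ + 2)⌋₊ := by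
        exact_mod_cast hgij
      rw [abs_lt]
      constructor <;> linarith
    have heq : (φ j + Λ) * K / (Λ + 2) - (φ i + Λ) * K / (Λ + 2) =
        (φ j - φ i) * (K / (Λ + 2)) := by ring
    have hpos : 0 < K / (Λ + 2) := by positivity
    rw [heq, abs_mul, abs_of_pos hpos, ← lt_div_iff₀ hpos, one_div_div] at hlt
    exact hlt.le

theorem abs_div_sub_one_lt_and_log_sub_le {α : ℝ} (hα1 : α < 1) {X Y s t : ℕ} (hX : 0 < X)
    (hY : 0 < Y) (hs : 0 < s) (ht : 0 < t)
    (h : |(s : ℝ) * (X : ℝ) - (t : ℝ) * (Y : ℝ)| < (X : ℝ) ^ α) :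
    |(t * Y : ℝ) / (s * X) - 1| < Real.exp (-((1 - α) * Real.log X)) ∧
      Real.log Y - Real.log X ≤ Real.log s + 1 := by
  have hX' : (0 : ℝ) < X := by exact_mod_cast hX
  have hY' : (0 : ℝ) < Y := by exact_mod_cast hY
  have hs' : (1 : ℝ) ≤ s := by exact_mod_cast hs
  have ht' : (1 : ℝ) ≤ t := by exact_mod_cast ht
  have hsX : (X : ℝ) ≤ s * X := le_mul_of_one_le_left hX'.le hs'
  constructor
  · have heq : (t * Y : ℝ) / (s * X) - 1 = (t * Y - s * X) / (s * X) := by field_simp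
    rw [heq, abs_div, abs_sub_comm, abs_of_pos (by positivity : (0 : ℝ) < s * X),
      div_lt_iff₀ (by positivity)]
    have hXα : (X : ℝ) ^ α = Real.exp (-((1 - α) * Real.log X)) * X := by
      rw [Real.rpow_def_of_pos hX']
      nth_rewrite 3 [← Real.exp_log hX']
      rw [← Real.exp_add]
      ring_nf
    rw [hXα] at h
    exact h.trans_le (mul_le_mul_of_nonneg_left hsX (Real.exp_pos _).le)
  · have h3 : (X : ℝ) ^ α ≤ X := by
      calc (X : ℝ) ^ α ≤ (X : ℝ) ^ (1 : ℝ) :=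
            Real.rpow_le_rpow_of_exponent_le (by exact_mod_cast hX) hα1.le
        _ = X := Real.rpow_one _
    have h4 := (abs_lt.1 (h.trans_le h3)).1
    have h5 : (Y : ℝ) ≤ t * Y := le_mul_of_one_le_left hY'.le ht'
    have h6 : (Y : ℝ) ≤ 2 * s * X := by linarith
    have h7 := Real.log_le_log hY' h6
    rw [Real.log_mul (by positivity) hX'.ne', Real.log_mul two_ne_zero (by positivity)] at h7
    have := Real.log_two_lt_d9
    linarith

theorem exists_lt_abs_exponent (hS : ∀ p ∈ S, p.Prime) {e : ℕ → ℤ} {s t : ℕ} (hs : 0 < s)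
    {M Γ τ : ℝ} (hM : 0 ≤ M) (hsΓ : Real.log s + M * ∑ p ∈ S, Real.log p ≤ Γ) (hτ0 : τ ≠ 0)
    (hτ : |τ| < Real.exp (-Γ))
    (hτexp : 1 + τ = t / s * Real.exp (∑ p ∈ S, (e p : ℝ) * Real.log p)) :
    ∃ p ∈ S, M < |(e p : ℝ)| := by
  by_contra! hcon
  have hs0 : (s : ℝ) ≠ 0 := by exact_mod_cast hs.ne'
  have hPpos : (0 : ℝ) < primePowProd S (-e) := by exact_mod_cast primePowProd_pos hS (-e)
  have heq : ((t * primePowProd S e : ℕ) : ℝ) / (s * primePowProd S (-e) : ℕ) = 1 + τ := by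
    rw [hτexp, ← primePowProd_div hS]
    push_cast
    field_simp
  have hne : t * primePowProd S e ≠ s * primePowProd S (-e) := by
    intro h
    rw [h, div_self (by push_cast; positivity)] at heq
    exact hτ0 (by linarith)
  have hlog : Real.log (s * primePowProd S (-e) : ℕ) ≤ Γ := by
    push_cast
    rw [Real.log_mul hs0 hPpos.ne']
    have := log_primePowProd_le hS (c := -e) hM fun p hp => by
      have := (abs_le.1 (hcon p hp)).1
      rw [Pi.neg_apply]
      push_cast
      linarith
    linarith
  have h3 := exp_neg_le_abs_div_sub_one
    (Nat.mul_pos hs (primePowProd_pos hS (-e))) hne hlog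
  rw [heq, add_sub_cancel_left] at h3
  exact absurd hτ (not_lt.2 h3)

/-- If the exponent vector `e` is close to the `N`-th multiple of an integral vector `c` for which
`∏ p ∈ S, p ^ c p` is close to `1`, then `t / s * ∏ p ∈ S, p ^ e p` is not too close to `1`. -/
theorem exp_neg_lt_of_exponent_decomposition (hS : ∀ p ∈ S, p.Prime) {e c : ℕ → ℤ} {s t N : ℕ}
    (hs : 0 < s) (ht : 0 < t) {ε lam M τ : ℝ} (hε : 0 < ε) (hε1 : ε ≤ 1)
    (hlam : 128 * (10 + 2 * ∑ p ∈ S, Real.log p) ≤ ε * lam) (hN : 8 ≤ ε * N) (hM : 0 ≤ M)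
    (hsN : Real.log s ≤ N) (hc : ∀ p, |(c p : ℝ)| ≤ M)
    (hr : ∀ p, |(e p : ℝ) - N * c p| ≤ 2 * N) {p₀ : ℕ} (hp₀ : p₀ ∈ S) (hcp₀ : c p₀ ≠ 0)
    (hsum : 2 * |∑ p ∈ S, (c p : ℝ) * Real.log p| ≤ Real.exp (-lam))
    (hτexp : 1 + τ = t / s * Real.exp (∑ p ∈ S, (e p : ℝ) * Real.log p)) :
    Real.exp (-(ε * N * (M * ∑ p ∈ S, Real.log p))) < |τ| := by
  have hΛ : 0 ≤ ∑ p ∈ S, Real.log p := Finset.sum_nonneg fun p _ => Real.log_natCast_nonneg p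
  have hlam0 : 0 ≤ lam := by
    by_contra! h
    nlinarith
  set r : ℕ → ℤ := fun p => e p - N * c p with hrdef
  have hrbound : ∀ p, |(r p : ℝ)| ≤ 2 * N := by
    intro p
    rw [hrdef]
    push_cast
    exact hr p
  have hV : (primePowProd S (-c) : ℝ) / primePowProd S c =
      Real.exp (-∑ p ∈ S, (c p : ℝ) * Real.log p) := by
    have := primePowProd_div hS (-c)
    rw [neg_neg] at this
    rw [this, ← Finset.sum_neg_distrib]
    congr 1
    exact Finset.sum_congr rfl fun p _ => by rw [Pi.neg_apply]; push_cast; ring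
  have hclose : |(primePowProd S (-c) : ℝ) / primePowProd S c - 1| ≤ Real.exp (-lam) := by
    have hexp1 : Real.exp (-lam) ≤ 1 := Real.exp_le_one_iff.2 (by linarith)
    rw [hV]
    refine (Real.abs_exp_sub_one_le ?_).trans ?_ <;> rw [abs_neg]
    · linarith [abs_nonneg (∑ p ∈ S, (c p : ℝ) * Real.log p)]
    · linarith
  have hs0 : (s : ℝ) ≠ 0 := by exact_mod_cast hs.ne'
  have hPr : (0 : ℝ) < primePowProd S (-r) := by exact_mod_cast primePowProd_pos hS (-r)
  refine exp_neg_lt_of_rational_approximation (C := 1 + 2 * ∑ p ∈ S, Real.log p) (lam := lam)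
    (a := primePowProd S (-c)) (b := primePowProd S c)
    (c := t * primePowProd S r) (d := s * primePowProd S (-r)) (by linarith) hε hε1
    (by linarith) hN (primePowProd_pos hS _) (primePowProd_pos hS _)
    (Nat.mul_pos ht (primePowProd_pos hS _)) (Nat.mul_pos hs (primePowProd_pos hS _))
    (primePowProd_ne_neg hS hp₀ hcp₀) (log_primePowProd_le hS hM fun p _ => ?_)
    (log_primePowProd_le hS hM fun p _ => (abs_le.1 (hc p)).2) ?_ hclose ?_
  · have := (abs_le.1 (hc p)).1
    rw [Pi.neg_apply]
    push_cast
    linarith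
  · push_cast
    rw [Real.log_mul hs0 hPr.ne']
    have h3 := log_primePowProd_le hS (c := -r) (M := 2 * N) (by positivity) fun p _ => by
      have := (abs_le.1 (hrbound p)).1
      rw [Pi.neg_apply]
      push_cast
      linarith
    linarith
  · rw [hτexp, hV, ← Real.exp_nat_mul]
    push_cast
    rw [mul_div_mul_comm, primePowProd_div hS, mul_left_comm, ← Real.exp_add]
    congr 2
    rw [mul_neg, Finset.mul_sum, ← Finset.sum_neg_distrib, ← Finset.sum_add_distrib]
    exact Finset.sum_congr rfl fun p _ => by rw [hrdef]; push_cast; ring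

theorem exp_neg_lt_of_large_exponent (hS : ∀ p ∈ S, p.Prime) {e : ℕ → ℤ} {s t K R : ℕ}
    (hs : 0 < s) (ht : 0 < t) {ε lam B τ : ℝ} (hε : 0 < ε) (hε1 : ε ≤ 1)
    (hlam : 128 * (10 + 2 * ∑ p ∈ S, Real.log p) ≤ ε * lam)
    (hK0 : 0 < K) (hK : 2 * (∑ p ∈ S, Real.log p + 2) * Real.exp lam ≤ K) (hR : 2 ≤ R * ε)
    (hB0 : 0 < B) (hB : K * R * (8 / ε + 4 * (K * R) + 2) ≤ B)
    (hsB : Real.log s * (2 * (K * R)) ≤ B) (hebound : ∀ p, |(e p : ℝ)| ≤ 4 * B)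
    (hesum : 0 ≤ ∑ p ∈ S, (e p : ℝ) * Real.log p)
    (hesum' : K * R * ∑ p ∈ S, (e p : ℝ) * Real.log p ≤ B)
    {p₀ : ℕ} (hp₀ : p₀ ∈ S) (hep₀ : ε * B < |(e p₀ : ℝ)|)
    (hτexp : 1 + τ = t / s * Real.exp (∑ p ∈ S, (e p : ℝ) * Real.log p)) :
    Real.exp (-(5 * ε * (∑ p ∈ S, Real.log p) * B)) < |τ| := by
  have hΛ : 0 ≤ ∑ p ∈ S, Real.log p := Finset.sum_nonneg fun p _ => Real.log_natCast_nonneg p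
  have hsumdiv : ∑ p ∈ S, (e p : ℝ) / B * Real.log p = (∑ p ∈ S, (e p : ℝ) * Real.log p) / B := by
    rw [Finset.sum_div]
    exact Finset.sum_congr rfl fun p _ => by ring
  obtain ⟨T, hRT, hTK, c, hc, hcsum⟩ := exists_integral_vector_sum_small (S := S)
    (w := fun p => Real.log p) (β := fun p => (e p : ℝ) / B) (R := R)
    (fun p _ => Real.log_natCast_nonneg p) hK0
    (by rw [hsumdiv]; exact div_nonneg hesum hB0.le)
    (by rw [hsumdiv, mul_div_assoc', div_le_one hB0]; exact hesum')
  have hTU : (T : ℝ) ≤ K * R := by exact_mod_cast hTK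
  have hRT' : (R : ℝ) ≤ T := by exact_mod_cast hRT
  have hK1 : (1 : ℝ) ≤ K := by exact_mod_cast hK0
  have hR0 : (1 : ℝ) ≤ R := by
    have : (R : ℝ) * ε ≤ R := mul_le_of_le_one_right (Nat.cast_nonneg _) hε1
    linarith
  have hT1 : (1 : ℝ) ≤ T := hR0.trans hRT'
  have hT0 : (0 : ℝ) < T := by linarith
  have hε8 : 0 < 8 / ε := by positivity
  have hcp₀ : c p₀ ≠ 0 := by
    intro h
    have h3 := hc p₀
    rw [h, Int.cast_zero, zero_sub, abs_neg, abs_mul, abs_div, abs_of_pos hB0, Nat.abs_cast] at h3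
    have h4 : ε < |(e p₀ : ℝ)| / B := by rwa [lt_div_iff₀ hB0]
    have h5 : (R : ℝ) * ε ≤ T * (|(e p₀ : ℝ)| / B) := by gcongr
    linarith
  have hβ : ∀ p, |(e p : ℝ) / B| ≤ 4 := by
    intro p
    rw [abs_div, abs_of_pos hB0, div_le_iff₀ hB0]
    exact hebound p
  have hcbound : ∀ p, |(c p : ℝ)| ≤ 5 * T := by
    intro p
    have h3 : |(T : ℝ) * ((e p : ℝ) / B)| ≤ T * 4 := by
      rw [abs_mul, Nat.abs_cast]; exact mul_le_mul_of_nonneg_left (hβ p) hT0.le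
    have h4 := abs_lt.1 (hc p)
    have h5 := abs_le.1 h3
    rw [abs_le]
    constructor <;> linarith
  obtain ⟨N, hN1, hN2⟩ : ∃ N : ℕ, (N : ℝ) * T ≤ B ∧ B < (N + 1) * T := by
    refine ⟨⌊B / T⌋₊, ?_, ?_⟩
    · rw [← le_div_iff₀ hT0]; exact Nat.floor_le (by positivity)
    · rw [← div_lt_iff₀ hT0]; exact Nat.lt_floor_add_one _
  have hN0 : (0 : ℝ) ≤ N := Nat.cast_nonneg _
  have hU0 : (0 : ℝ) < K * R := by linarith
  have hBU : B < (K * R) * (N + 1) :=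
    hN2.trans_le (by rw [mul_comm]; exact mul_le_mul_of_nonneg_right hTU (by linarith))
  have hNbig : 8 / ε + 4 * (K * R) + 1 ≤ N := by
    have := lt_of_mul_lt_mul_left (hB.trans_lt hBU) hU0.le
    linarith
  have hεN : 8 ≤ ε * N := by
    rw [mul_comm, ← div_le_iff₀ hε]; linarith
  have hsN : Real.log s ≤ N := by
    have h3 : (K * R : ℝ) * (2 * Real.log s) ≤ K * R * (N + 1) := by linarith
    have h4 := le_of_mul_le_mul_left h3 hU0
    linarith
  have hrbound : ∀ p, |(e p : ℝ) - N * c p| ≤ 2 * N := by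
    intro p
    have h3 : (e p : ℝ) - N * c p =
        (B - N * T) * ((e p : ℝ) / B) - N * ((c p : ℝ) - T * ((e p : ℝ) / B)) := by
      field_simp; ring
    have h4 : |(B - N * T) * ((e p : ℝ) / B)| ≤ T * 4 := by
      rw [abs_mul, abs_of_nonneg (by linarith)]
      exact mul_le_mul (by linarith) (hβ p) (abs_nonneg _) hT0.le
    have h5 : |(N : ℝ) * ((c p : ℝ) - T * ((e p : ℝ) / B))| ≤ N * 1 := by
      rw [abs_mul, Nat.abs_cast]
      exact mul_le_mul_of_nonneg_left (hc p).le hN0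
    rw [h3]
    refine (abs_sub _ _).trans ?_
    linarith
  have hsmall : 2 * |∑ p ∈ S, (c p : ℝ) * Real.log p| ≤ Real.exp (-lam) := by
    have h3 : 2 * ((∑ p ∈ S, Real.log p + 2) / K) ≤ Real.exp (-lam) := by
      rw [Real.exp_neg, mul_div_assoc', div_le_iff₀ (by linarith), inv_mul_eq_div,
        le_div_iff₀ (Real.exp_pos _)]
      exact hK
    linarith
  refine lt_of_le_of_lt (Real.exp_le_exp.2 (neg_le_neg ?_))
    (exp_neg_lt_of_exponent_decomposition hS hs ht hε hε1 hlam hεN (M := 5 * T) (by positivity)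
      hsN hcbound hrbound hp₀ hcp₀ hsmall hτexp)
  calc ε * N * (5 * T * ∑ p ∈ S, Real.log p) = 5 * ε * (∑ p ∈ S, Real.log p) * (N * T) := by ring
    _ ≤ _ := by gcongr

/-- Smooth numbers `X < Y` with `t * Y` close to `s * X` do not exist when `s` is small. -/
theorem exists_forall_smooth_not_close (hS : ∀ p ∈ S, p.Prime) {α : ℝ} (hα : 0 < α)
    (hα1 : α < 1) :
    ∃ δ > 0, ∃ B₀ : ℝ, ∀ X Y s t : ℕ, 0 < X → X < Y → 0 < s → 0 < t →
      (∀ p : ℕ, p.Prime → p ∣ X → p ∈ S) → (∀ p : ℕ, p.Prime → p ∣ Y → p ∈ S) →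
      B₀ ≤ Real.log X → Real.log s ≤ δ * Real.log X →
      1 ≤ |(s : ℝ) * (X : ℝ) - (t : ℝ) * (Y : ℝ)| →
      ¬ |(s : ℝ) * (X : ℝ) - (t : ℝ) * (Y : ℝ)| < (X : ℝ) ^ α := by
  have hΛ : 0 ≤ ∑ p ∈ S, Real.log p := Finset.sum_nonneg fun p _ => Real.log_natCast_nonneg p
  obtain ⟨ε, hε, hε1, hεΛ⟩ : ∃ ε > 0, ε ≤ 1 ∧ 5 * ε * (∑ p ∈ S, Real.log p) ≤ 1 - α := by
    refine ⟨(1 - α) / (5 * (∑ p ∈ S, Real.log p + 1)), div_pos (by linarith) (by linarith), ?_, ?_⟩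
    · rw [div_le_one (by linarith)]; linarith
    · rw [mul_div_assoc', div_mul_eq_mul_div, div_le_iff₀ (by linarith)]
      nlinarith
  obtain ⟨lam, hlam⟩ : ∃ lam, 128 * (10 + 2 * ∑ p ∈ S, Real.log p) ≤ ε * lam :=
    ⟨128 * (10 + 2 * ∑ p ∈ S, Real.log p) / ε, by rw [mul_div_cancel₀ _ hε.ne']⟩
  obtain ⟨K, hK⟩ := exists_nat_ge (2 * (∑ p ∈ S, Real.log p + 2) * Real.exp lam)
  have hKpos : 0 < K := by
    have : (0 : ℝ) < K := lt_of_lt_of_le (by positivity) hK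
    exact_mod_cast this
  obtain ⟨R, hR⟩ := exists_nat_ge (2 / ε)
  rw [div_le_iff₀ hε] at hR
  have hK1 : (1 : ℝ) ≤ K := by exact_mod_cast hKpos
  have hR0 : (1 : ℝ) ≤ R := by
    have : (R : ℝ) * ε ≤ R := mul_le_of_le_one_right (Nat.cast_nonneg _) hε1
    linarith
  have hU1 : (1 : ℝ) ≤ K * R := one_le_mul_of_one_le_of_one_le hK1 hR0
  refine ⟨min ((1 - α) / 4) (1 / (2 * (K * R))), lt_min (by linarith) (by positivity),
    K * R * (8 / ε + 4 * (K * R) + 2), ?_⟩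
  intro X Y s t hX hXY hs ht hXS hYS hB hsB h1 h2
  have hY : 0 < Y := hX.trans hXY
  have hX' : (0 : ℝ) < X := by exact_mod_cast hX
  have hY' : (0 : ℝ) < Y := by exact_mod_cast hY
  have hs' : (0 : ℝ) < s := by exact_mod_cast hs
  obtain ⟨hτlt, hσ⟩ := abs_div_sub_one_lt_and_log_sub_le hα1 hX hY hs ht h2
  have hσ0 : 0 ≤ Real.log Y - Real.log X :=
    sub_nonneg.2 (Real.log_le_log hX' (by exact_mod_cast hXY.le))
  have hBU : 2 * (K * R : ℝ) ≤ Real.log X := by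
    have : 0 < 8 / ε := by positivity
    nlinarith
  have hB0 : 0 < Real.log X := by linarith
  have hsB1 : Real.log s ≤ (1 - α) / 4 * Real.log X :=
    hsB.trans (mul_le_mul_of_nonneg_right (min_le_left _ _) hB0.le)
  have hsB2 : Real.log s * (2 * (K * R)) ≤ Real.log X := by
    have h3 := hsB.trans (mul_le_mul_of_nonneg_right (min_le_right _ _) hB0.le)
    rwa [one_div_mul_eq_div, le_div_iff₀ (by linarith)] at h3
  obtain ⟨e, he⟩ : ∃ e : ℕ → ℤ, ∀ p, e p = (Y.factorization p : ℤ) - X.factorization p :=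
    ⟨_, fun _ => rfl⟩
  have hesum : ∑ p ∈ S, (e p : ℝ) * Real.log p = Real.log Y - Real.log X := by
    rw [log_eq_sum_factorization hS hX hXS, log_eq_sum_factorization hS hY hYS,
      ← Finset.sum_sub_distrib]
    exact Finset.sum_congr rfl fun p _ => by rw [he]; push_cast; ring
  have hlogY : Real.log Y ≤ 2 * Real.log X := by
    have h3 : (1 - α) * Real.log X ≤ Real.log X := mul_le_of_le_one_left hB0.le (by linarith)
    linarith
  have hebound : ∀ p, |(e p : ℝ)| ≤ 4 * Real.log X := by
    intro p
    have h3 := factorization_le_two_mul_log hX p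
    have h4 := factorization_le_two_mul_log hY p
    have h6 : (0 : ℝ) ≤ X.factorization p := Nat.cast_nonneg _
    have h7 : (0 : ℝ) ≤ Y.factorization p := Nat.cast_nonneg _
    rw [he]
    push_cast
    rw [abs_le]
    constructor <;> linarith
  have hτ0 : (t * Y : ℝ) / (s * X) - 1 ≠ 0 := by
    intro h
    rw [sub_eq_zero, div_eq_one_iff_eq (by positivity)] at h
    rw [h, sub_self, abs_zero] at h1
    linarith
  have hτexp : 1 + ((t * Y : ℝ) / (s * X) - 1) =
      t / s * Real.exp (∑ p ∈ S, (e p : ℝ) * Real.log p) := by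
    rw [hesum, Real.exp_sub, Real.exp_log hX', Real.exp_log hY']
    field_simp
    ring
  obtain ⟨p₀, hp₀, hep₀⟩ := exists_lt_abs_exponent hS (M := ε * Real.log X) hs (by positivity)
    (by nlinarith : _ ≤ (1 - α) * Real.log X) hτ0 hτlt hτexp
  have hfinal := exp_neg_lt_of_large_exponent hS hs ht hε hε1 hlam hKpos hK hR hB0 hB hsB2 hebound
    (by rwa [hesum])
    (by
      rw [hesum]
      have := mul_le_mul_of_nonneg_left hσ (by linarith : (0 : ℝ) ≤ K * R)
      linarith)
    hp₀ hep₀ hτexp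
  have h3 := Real.exp_lt_exp.1 (hfinal.trans hτlt)
  have h4 := mul_le_mul_of_nonneg_right hεΛ hB0.le
  linarith

/-- An increasing sequence of `S`-smooth numbers grows at least like `2 ^ m ^ (1 / #S)`. -/
theorem le_log_add_one_pow_card {q : ℕ → ℕ} (hqpos : ∀ n, 1 ≤ n → 0 < q n)
    (hq : StrictMonoOn q (Set.Ici 1))
    (hsmooth : ∀ n, 1 ≤ n → ∀ p : ℕ, p.Prime → p ∣ q n → p ∈ S) {m : ℕ} (hm : 1 ≤ m) :
    m ≤ (Nat.log 2 (q m) + 1) ^ S.card := by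
  have hcard : (Finset.Icc 1 m).card ≤
      (Fintype.piFinset fun _ : S => Finset.range (Nat.log 2 (q m) + 1)).card := by
    refine Finset.card_le_card_of_injOn (fun i p => (q i).factorization p) ?_ ?_
    · intro i hi
      obtain ⟨hi1, him⟩ := Finset.mem_Icc.1 hi
      refine Finset.mem_coe.2 (Fintype.mem_piFinset.2 fun p => ?_)
      rw [Finset.mem_range, Nat.lt_succ_iff]
      have hle : q i ≤ q m := hq.monotoneOn hi1 hm him
      refine Nat.le_log_of_pow_le one_lt_two (le_trans ?_ hle)
      by_cases hp : (p : ℕ).Prime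
      · exact (Nat.pow_le_pow_left hp.two_le _).trans (Nat.ordProj_le p (hqpos i hi1).ne')
      · simpa [Nat.factorization_eq_zero_of_not_prime _ hp] using Nat.succ_le_of_lt (hqpos i hi1)
    · intro i hi j hj hij
      have hi1 := (Finset.mem_Icc.1 hi).1
      have hj1 := (Finset.mem_Icc.1 hj).1
      refine hq.injOn hi1 hj1 (Nat.eq_of_factorization_eq (hqpos i hi1).ne' (hqpos j hj1).ne'
        fun p => ?_)
      by_cases hp : p ∈ S
      · exact congrFun hij ⟨p, hp⟩
      · have hzero : ∀ l, 1 ≤ l → (q l).factorization p = 0 := by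
          intro l hl
          by_cases hpp : p.Prime
          · exact Nat.factorization_eq_zero_of_not_dvd fun h => hp (hsmooth l hl p hpp h)
          · exact Nat.factorization_eq_zero_of_not_prime _ hpp
        rw [hzero i hi1, hzero j hj1]
  simpa using hcard

theorem exists_forall_mul_log_le (k : ℕ) {δ : ℝ} (hδ : 0 < δ) :
    ∃ B₀ : ℝ, ∀ B ≥ B₀, k * Real.log (2 * B + 1) ≤ δ * B := by
  have hc : 0 < δ / (3 * (k + 1)) := by positivity
  have hev := Real.isLittleO_log_id_atTop.bound hc
  obtain ⟨y₀, hy₀⟩ := Filter.eventually_atTop.1 hev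
  refine ⟨max 1 y₀, fun B hB => ?_⟩
  have hB1 : 1 ≤ B := (le_max_left _ _).trans hB
  have hBy : y₀ ≤ 2 * B + 1 := by linarith [(le_max_right 1 y₀).trans hB]
  have h := hy₀ _ hBy
  rw [Real.norm_eq_abs, Real.norm_eq_abs, id, abs_of_nonneg (Real.log_nonneg (by linarith)),
    abs_of_nonneg (by linarith : 0 ≤ 2 * B + 1)] at h
  calc k * Real.log (2 * B + 1) ≤ (k + 1) * (δ / (3 * (k + 1)) * (3 * B)) := by
        refine mul_le_mul (by linarith) (h.trans ?_) (Real.log_nonneg (by linarith))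
          (by positivity)
        exact mul_le_mul_of_nonneg_left (by linarith) hc.le
    _ = δ * B := by field_simp

end SmoothNumbers

theorem statement11
    (k : ℕ) (hk : 1 ≤ k)
    (S : Finset ℕ) (hS : ∀ p ∈ S, p.Prime) (hcard : S.card = k)
    (q : ℕ → ℕ) (hqpos : ∀ n, 1 ≤ n → 0 < q n)
    (hqmono : ∀ n, 1 ≤ n → q n < q (n + 1))
    (hsmooth : ∀ n, 1 ≤ n → ∀ p : ℕ, p.Prime → p ∣ q n → p ∈ S)
    (α : ℝ) (hα : 0 < α) (hα1 : α < 1) :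
    ∃ m₀ : ℕ, 1 ≤ m₀ ∧ ∀ m n : ℕ, m₀ ≤ m → m < n →
      ∀ s t : ℕ, 1 ≤ s → 1 ≤ t →
        1 ≤ |(s : ℝ) * (q m : ℝ) - (t : ℝ) * (q n : ℝ)| →
        |(s : ℝ) * (q m : ℝ) - (t : ℝ) * (q n : ℝ)| < (q m : ℝ) ^ α →
        m ^ 12 < s := by
  have hq : StrictMonoOn q (Set.Ici 1) := by
    refine strictMonoOn_of_lt_add_one Set.ordConnected_Ici fun n _ hn _ => hqmono n hn
  obtain ⟨δ, hδ, B₀, hclose⟩ := exists_forall_smooth_not_close hS hα hα1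
  obtain ⟨B₁, hB₁⟩ := exists_forall_mul_log_le (12 * k) hδ
  obtain ⟨m₀, hm₀⟩ := exists_nat_ge (Real.exp (max B₀ B₁))
  refine ⟨max 1 m₀, le_max_left _ _, fun m n hm hmn s t hs ht h1 h2 => ?_⟩
  by_contra! hsm
  have hm1 : 1 ≤ m := (le_max_left _ _).trans hm
  have hmpos : (0 : ℝ) < m := by exact_mod_cast hm1
  have hmq : m ≤ q m := by
    clear hm hmn h1 h2 hsm hmpos
    induction m, hm1 using Nat.le_induction with
    | base => exact hqpos 1 le_rfl
    | succ l hl ih => exact ih.trans_lt (hqmono l hl)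
  have hqm : (0 : ℝ) < q m := by exact_mod_cast hqpos m hm1
  have hlog : max B₀ B₁ ≤ Real.log (q m) := by
    rw [Real.le_log_iff_exp_le hqm]
    refine hm₀.trans ?_
    exact_mod_cast ((le_max_right _ _).trans hm).trans hmq
  have hlogm : Real.log m ≤ k * Real.log (2 * Real.log (q m) + 1) := by
    have h3 := le_log_add_one_pow_card hqpos hq hsmooth hm1
    rw [hcard] at h3
    have h4 : (m : ℝ) ≤ ((Nat.log 2 (q m) : ℝ) + 1) ^ k := by exact_mod_cast h3
    have h5 : (Nat.log 2 (q m) : ℝ) ≤ 2 * Real.log (q m) := by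
      have h6 : Real.log ((2 : ℝ) ^ Nat.log 2 (q m)) ≤ Real.log (q m) :=
        Real.log_le_log (by positivity)
          (by exact_mod_cast Nat.pow_log_le_self 2 (hqpos m hm1).ne')
      rw [Real.log_pow] at h6
      have h7 := Real.log_two_gt_d9
      have h8 : (0 : ℝ) ≤ Nat.log 2 (q m) := Nat.cast_nonneg _
      nlinarith
    rw [← Real.log_pow]
    exact Real.log_le_log hmpos (h4.trans (pow_le_pow_left₀ (by positivity) (by linarith) _))
  have hlogs : Real.log s ≤ δ * Real.log (q m) := by
    have h3 : Real.log s ≤ 12 * Real.log m := by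
      have h4 : Real.log s ≤ Real.log ((m : ℝ) ^ 12) :=
        Real.log_le_log (by exact_mod_cast hs) (by exact_mod_cast hsm)
      rw [Real.log_pow] at h4
      exact_mod_cast h4
    have h5 := hB₁ _ ((le_max_right _ _).trans hlog)
    push_cast at h5
    linarith
  exact hclose (q m) (q n) s t (hqpos m hm1) (hq hm1 (hm1.trans hmn.le) hmn) hs ht
    (hsmooth m hm1) (hsmooth n (hm1.trans hmn.le)) ((le_max_left _ _).trans hlog) hlogs h1 h2
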